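/- Let d ≥ 1 and let r₀, k₀, L, D > 0 and x, y ∈ ℝ^d. Define r_T = r₀ √(1 + D L³/(3 r₀²)), define χ_T > 0 by χ_T² = 2 r_T²/(k₀ D L²), and define ρ_T > 0 by ρ_T² = r_T² / (1 + D L³/(3 r₀²) + k₀² D r₀² L/4 + k₀² D² L⁴/48). Then the Gaussian integral (r₀²/(8π))^{d/2} ∫_{ℝ^d} exp( − r₀² |η|²/8 − |y|²/(2 r₀²) − i η·x − (k₀² D/8)·( L³ |η|²/(3 k₀²) + L² (η·y)/k₀ + L |y|² ) ) dη equals (r₀/r_T)^d · exp( − 2|x|²/r_T² − |y|²/(2 ρ_T²) + i (x·y)/χ_T² ). -/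

import Mathlib

open MeasureTheory Real
open scoped RealInnerProductSpace

/-!
The exponent is a quadratic polynomial in `η` with leading coefficient `-r_T² / 8` and complex
linear part `-(i x + a y) · η`, where `a = k₀ D L² / 8`. Integrating out `η` completes the square:
`π / (r_T² / 8)` combines with the prefactor into `(r₀ / r_T)^d`, and the linear part contributes
`(-|x|² + 2 i a x · y + a² |y|²) / (r_T² / 2)`. The mixed term is the phase `x · y / χ_T²`, and the
`|y|²` term partly offsets the decay in `y` already present, leaving the rate `1 / (2 ρ_T²)`.
-/

section GaussianIntegral

variable {ι V : Type*} [Fintype ι] [NormedAddCommGroup V] [InnerProductSpace ℝ V]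

theorem sum_mul_inner_add_mul_inner_sq (e : OrthonormalBasis ι ℝ V) (c₁ c₂ : ℂ) (w₁ w₂ : V) :
    ∑ i, (c₁ * ⟪w₁, e i⟫ + c₂ * ⟪w₂, e i⟫) ^ 2 =
      c₁ ^ 2 * ‖w₁‖ ^ 2 + 2 * c₁ * c₂ * ⟪w₁, w₂⟫ + c₂ ^ 2 * ‖w₂‖ ^ 2 := by
  have parseval (u v : V) : ∑ i, (⟪u, e i⟫ : ℂ) * ⟪v, e i⟫ = ⟪u, v⟫ := by
    simpa only [real_inner_comm v, Complex.ofReal_sum, Complex.ofReal_mul] using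
      congrArg Complex.ofReal (e.sum_inner_mul_inner u v)
  calc ∑ i, (c₁ * ⟪w₁, e i⟫ + c₂ * ⟪w₂, e i⟫) ^ 2
      = c₁ ^ 2 * ∑ i, (⟪w₁, e i⟫ : ℂ) * ⟪w₁, e i⟫
          + 2 * c₁ * c₂ * ∑ i, (⟪w₁, e i⟫ : ℂ) * ⟪w₂, e i⟫
          + c₂ ^ 2 * ∑ i, (⟪w₂, e i⟫ : ℂ) * ⟪w₂, e i⟫ := by
        simp only [Finset.mul_sum, ← Finset.sum_add_distrib]
        exact Finset.sum_congr rfl fun i _ ↦ by ring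
    _ = _ := by simp only [parseval, real_inner_self_eq_norm_sq, Complex.ofReal_pow]

variable [FiniteDimensional ℝ V] [MeasurableSpace V] [BorelSpace V] {b : ℂ}

theorem integral_cexp_neg_mul_sq_norm_add_sum_inner (e : OrthonormalBasis ι ℝ V)
    (hb : 0 < b.re) (c : ι → ℂ) :
    ∫ v : V, Complex.exp (-b * ‖v‖ ^ 2 + ∑ i, c i * ⟪e i, v⟫) =
      (π / b) ^ (Module.finrank ℝ V / 2 : ℂ) * Complex.exp ((∑ i, c i ^ 2) / (4 * b)) := by
  rw [Module.finrank_eq_card_basis e.toBasis,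
    ← GaussianFourier.integral_cexp_neg_mul_sum_add hb c,
    ← (PiLp.volume_preserving_ofLp ι).integral_comp
      (MeasurableEquiv.toLp 2 _).symm.measurableEmbedding,
    ← e.measurePreserving_repr.integral_comp e.repr.toHomeomorph.measurableEmbedding]
  simp only [← e.repr_apply_apply, ← Complex.ofReal_pow, ← Complex.ofReal_sum,
    ← EuclideanSpace.real_norm_sq_eq, LinearIsometryEquiv.norm_map]

theorem integral_cexp_neg_mul_sq_norm_add_inner_add_inner (hb : 0 < b.re) (c₁ c₂ : ℂ) (w₁ w₂ : V) :
    ∫ v : V, Complex.exp (-b * ‖v‖ ^ 2 + (c₁ * ⟪w₁, v⟫ + c₂ * ⟪w₂, v⟫)) =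
      (π / b) ^ (Module.finrank ℝ V / 2 : ℂ) * Complex.exp
        ((c₁ ^ 2 * ‖w₁‖ ^ 2 + 2 * c₁ * c₂ * ⟪w₁, w₂⟫ + c₂ ^ 2 * ‖w₂‖ ^ 2) / (4 * b)) := by
  let e := stdOrthonormalBasis ℝ V
  have linear_part (v : V) : c₁ * ⟪w₁, v⟫ + c₂ * ⟪w₂, v⟫ =
      ∑ i, (c₁ * ⟪w₁, e i⟫ + c₂ * ⟪w₂, e i⟫) * ⟪e i, v⟫ := by
    rw [← e.sum_inner_mul_inner w₁ v, ← e.sum_inner_mul_inner w₂ v]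
    simp only [Complex.ofReal_sum, Complex.ofReal_mul, Finset.mul_sum, ← Finset.sum_add_distrib,
      add_mul, mul_assoc]
  rw [← sum_mul_inner_add_mul_inner_sq e, ← integral_cexp_neg_mul_sq_norm_add_sum_inner e hb]
  exact integral_congr_ae (.of_forall fun v ↦ by simp only [linear_part v])

end GaussianIntegral

section TransmittedField

theorem sq_mul_sqrt_one_add_div_mul_sq {r a c : ℝ} (hr : r ≠ 0) (h : 0 ≤ 1 + a / (c * r ^ 2)) :
    (r * √(1 + a / (c * r ^ 2))) ^ 2 = r ^ 2 + a / c := by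
  rw [mul_pow, sq_sqrt h]
  field_simp

theorem rpow_half_mul_cpow_half_eq_div_pow {r s κ : ℝ} (hκ : 0 < κ) (h : 0 ≤ r / s) (n : ℕ) :
    (((r ^ 2 / (κ * π)) ^ ((n : ℝ) / 2) : ℝ) : ℂ) * (π / (s ^ 2 / κ : ℝ)) ^ (n / 2 : ℂ) =
      ((r / s) ^ n : ℝ) := by
  have real_form : (r ^ 2 / (κ * π)) ^ ((n : ℝ) / 2) * (π / (s ^ 2 / κ)) ^ ((n : ℝ) / 2) =
      (r / s) ^ n := by
    have ratio : r ^ 2 / (κ * π) * (π / (s ^ 2 / κ)) = (r / s) ^ 2 := by field_simp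
    rw [← mul_rpow (by positivity) (by positivity), ratio,
      rpow_div_two_eq_sqrt _ (sq_nonneg _), sqrt_sq h, rpow_natCast]
  rw [← real_form, Complex.ofReal_mul, Complex.ofReal_cpow (x := π / (s ^ 2 / κ)) (by positivity)]
  push_cast
  rfl

variable {r₀ k₀ L D rT χT ρT : ℝ}
variable {V : Type*} [NormedAddCommGroup V] [InnerProductSpace ℝ V]

theorem transmitted_exponent_eq (hk₀ : k₀ ≠ 0) (hrT : rT ^ 2 = r₀ ^ 2 + D * L ^ 3 / 3)
    (x y η : V) :
    -((r₀ ^ 2 * ‖η‖ ^ 2 / 8 : ℝ) : ℂ) - ((‖y‖ ^ 2 / (2 * r₀ ^ 2) : ℝ) : ℂ)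
        - Complex.I * ((⟪η, x⟫ : ℝ) : ℂ)
        - (((k₀ ^ 2 * D / 8) *
            (L ^ 3 * ‖η‖ ^ 2 / (3 * k₀ ^ 2) + L ^ 2 * ⟪η, y⟫ / k₀ + L * ‖y‖ ^ 2) : ℝ) : ℂ) =
      -((rT ^ 2 / 8 : ℝ) : ℂ) * ‖η‖ ^ 2
        + (-Complex.I * ⟪x, η⟫ + ((-(k₀ * D * L ^ 2 / 8) : ℝ) : ℂ) * ⟪y, η⟫)
        + ((-(1 / (2 * r₀ ^ 2) + k₀ ^ 2 * D * L / 8) * ‖y‖ ^ 2 : ℝ) : ℂ) := by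
  have medium_part : k₀ ^ 2 * D / 8 *
        (L ^ 3 * ‖η‖ ^ 2 / (3 * k₀ ^ 2) + L ^ 2 * ⟪η, y⟫ / k₀ + L * ‖y‖ ^ 2) =
      D * L ^ 3 / 24 * ‖η‖ ^ 2 + k₀ * D * L ^ 2 / 8 * ⟪η, y⟫ + k₀ ^ 2 * D * L / 8 * ‖y‖ ^ 2 := by
    field_simp
    ring
  rw [medium_part, hrT, real_inner_comm x η, real_inner_comm y η]
  push_cast
  ring

theorem decay_rate_eq_correlation_rate_add (hr₀ : r₀ ≠ 0) (hrT₀ : rT ≠ 0)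
    (hrT : rT ^ 2 = r₀ ^ 2 + D * L ^ 3 / 3)
    (hρT : ρT ^ 2 = rT ^ 2 / (1 + D * L ^ 3 / (3 * r₀ ^ 2) + k₀ ^ 2 * D * r₀ ^ 2 * L / 4
      + k₀ ^ 2 * D ^ 2 * L ^ 4 / 48)) :
    1 / (2 * r₀ ^ 2) + k₀ ^ 2 * D * L / 8 =
      1 / (2 * ρT ^ 2) + (k₀ * D * L ^ 2 / 8) ^ 2 / (4 * (rT ^ 2 / 8)) := by
  rw [hρT, ← mul_div_assoc, one_div_div]
  field_simp
  rw [hrT]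
  ring

theorem completed_square_exponent_eq (hr₀ : r₀ ≠ 0) (hrT₀ : rT ≠ 0)
    (hrT : rT ^ 2 = r₀ ^ 2 + D * L ^ 3 / 3)
    (hχT : χT ^ 2 = 2 * rT ^ 2 / (k₀ * D * L ^ 2))
    (hρT : ρT ^ 2 = rT ^ 2 / (1 + D * L ^ 3 / (3 * r₀ ^ 2) + k₀ ^ 2 * D * r₀ ^ 2 * L / 4
      + k₀ ^ 2 * D ^ 2 * L ^ 4 / 48)) (x y : V) :
    ((-Complex.I) ^ 2 * ‖x‖ ^ 2 + 2 * -Complex.I * ((-(k₀ * D * L ^ 2 / 8) : ℝ) : ℂ) * ⟪x, y⟫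
          + ((-(k₀ * D * L ^ 2 / 8) : ℝ) : ℂ) ^ 2 * ‖y‖ ^ 2) / (4 * ((rT ^ 2 / 8 : ℝ) : ℂ))
        + ((-(1 / (2 * r₀ ^ 2) + k₀ ^ 2 * D * L / 8) * ‖y‖ ^ 2 : ℝ) : ℂ) =
      -((2 * ‖x‖ ^ 2 / rT ^ 2 : ℝ) : ℂ) - ((‖y‖ ^ 2 / (2 * ρT ^ 2) : ℝ) : ℂ)
        + Complex.I * ((⟪x, y⟫ / χT ^ 2 : ℝ) : ℂ) := by
  have hrT₀' : (rT : ℂ) ≠ 0 := Complex.ofReal_ne_zero.mpr hrT₀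
  have phase : ⟪x, y⟫ / χT ^ 2 = k₀ * D * L ^ 2 * ⟪x, y⟫ / (2 * rT ^ 2) := by
    rw [hχT, div_div_eq_mul_div, mul_comm ⟪x, y⟫]
  rw [decay_rate_eq_correlation_rate_add hr₀ hrT₀ hrT hρT, phase, neg_sq, Complex.I_sq]
  push_cast
  field_simp
  ring

variable [FiniteDimensional ℝ V] [MeasurableSpace V] [BorelSpace V]

theorem transmitted_autocorrelation_gaussian_general (x y : V)
    (hrT : rT = r₀ * √(1 + D * L ^ 3 / (3 * r₀ ^ 2)))
    (hχT : 0 < χT ∧ χT ^ 2 = 2 * rT ^ 2 / (k₀ * D * L ^ 2))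
    (hρT : 0 < ρT ∧ ρT ^ 2 = rT ^ 2 /
      (1 + D * L ^ 3 / (3 * r₀ ^ 2) + k₀ ^ 2 * D * r₀ ^ 2 * L / 4
        + k₀ ^ 2 * D ^ 2 * L ^ 4 / 48)) :
    (((r₀ ^ 2 / (8 * π)) ^ ((Module.finrank ℝ V : ℝ) / 2) : ℝ) : ℂ) *
      (∫ η : V,
        Complex.exp
          (-((r₀ ^ 2 * ‖η‖ ^ 2 / 8 : ℝ) : ℂ) - ((‖y‖ ^ 2 / (2 * r₀ ^ 2) : ℝ) : ℂ)
            - Complex.I * ((⟪η, x⟫ : ℝ) : ℂ)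
            - (((k₀ ^ 2 * D / 8) *
                (L ^ 3 * ‖η‖ ^ 2 / (3 * k₀ ^ 2) + L ^ 2 * ⟪η, y⟫ / k₀ + L * ‖y‖ ^ 2) : ℝ) : ℂ)))
      = (((r₀ / rT) ^ Module.finrank ℝ V : ℝ) : ℂ) *
        Complex.exp
          (-((2 * ‖x‖ ^ 2 / rT ^ 2 : ℝ) : ℂ) - ((‖y‖ ^ 2 / (2 * ρT ^ 2) : ℝ) : ℂ)
            + Complex.I * ((⟪x, y⟫ / χT ^ 2 : ℝ) : ℂ)) := by
  -- `χT ^ 2` is nonzero, so by `x / 0 = 0` neither its numerator nor its denominator vanishes.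
  obtain ⟨hrT₀, hk₀⟩ : rT ≠ 0 ∧ k₀ ≠ 0 := by
    constructor <;> rintro rfl <;> simp [hχT.1.ne'] at hχT
  have hr₀ : r₀ ≠ 0 := left_ne_zero_of_mul (hrT ▸ hrT₀)
  have hspread : 0 < 1 + D * L ^ 3 / (3 * r₀ ^ 2) :=
    sqrt_ne_zero'.mp (right_ne_zero_of_mul (hrT ▸ hrT₀))
  have hrT_sq : rT ^ 2 = r₀ ^ 2 + D * L ^ 3 / 3 :=
    hrT ▸ sq_mul_sqrt_one_add_div_mul_sq hr₀ hspread.le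
  have hratio : 0 ≤ r₀ / rT := by
    rw [hrT, div_mul_cancel_left₀ hr₀]
    positivity
  have hb : 0 < ((rT ^ 2 / 8 : ℝ) : ℂ).re := by
    rw [Complex.ofReal_re]
    positivity
  simp only [transmitted_exponent_eq hk₀ hrT_sq]
  simp only [Complex.exp_add _ (Complex.ofReal _), integral_mul_const]
  rw [integral_cexp_neg_mul_sq_norm_add_inner_add_inner hb, mul_assoc, ← Complex.exp_add,
    completed_square_exponent_eq hr₀ hrT₀ hrT_sq hχT.2 hρT.2, ← mul_assoc,
    rpow_half_mul_cpow_half_eq_div_pow (by norm_num) hratio]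

end TransmittedField

/-- Gaussian evaluation of the transmitted-field autocorrelation (5.5).
With `r_T = r₀√(1 + DL³/(3r₀²))`, `χ_T² = 2r_T²/(k₀DL²)` and
`ρ_T² = r_T²/(1 + DL³/(3r₀²) + k₀²Dr₀²L/4 + k₀²D²L⁴/48)`, the Gaussian integral
`(r₀²/(8π))^{d/2} ∫ exp(−r₀²|η|²/8 − |y|²/(2r₀²) − iη·x − (k₀²D/8)(L³|η|²/(3k₀²) + L²η·y/k₀ + L|y|²)) dη`
equals `(r₀/r_T)^d exp(−2|x|²/r_T² − |y|²/(2ρ_T²) + i x·y/χ_T²)`. -/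
theorem transmitted_autocorrelation_gaussian (d : ℕ) (hd : 1 ≤ d)
    (r₀ k₀ L D : ℝ) (hr₀ : 0 < r₀) (hk₀ : 0 < k₀) (hL : 0 < L) (hD : 0 < D)
    (x y : EuclideanSpace ℝ (Fin d))
    (rT χT ρT : ℝ) (hrT : rT = r₀ * Real.sqrt (1 + D * L ^ 3 / (3 * r₀ ^ 2)))
    (hχT : 0 < χT ∧ χT ^ 2 = 2 * rT ^ 2 / (k₀ * D * L ^ 2))
    (hρT : 0 < ρT ∧ ρT ^ 2 = rT ^ 2 /
      (1 + D * L ^ 3 / (3 * r₀ ^ 2) + k₀ ^ 2 * D * r₀ ^ 2 * L / 4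
        + k₀ ^ 2 * D ^ 2 * L ^ 4 / 48)) :
    (((r₀ ^ 2 / (8 * π)) ^ ((d : ℝ) / 2) : ℝ) : ℂ) *
      (∫ η : EuclideanSpace ℝ (Fin d),
        Complex.exp
          (-((r₀ ^ 2 * ‖η‖ ^ 2 / 8 : ℝ) : ℂ) - ((‖y‖ ^ 2 / (2 * r₀ ^ 2) : ℝ) : ℂ)
            - Complex.I * ((⟪η, x⟫ : ℝ) : ℂ)
            - (((k₀ ^ 2 * D / 8) *
                (L ^ 3 * ‖η‖ ^ 2 / (3 * k₀ ^ 2) + L ^ 2 * ⟪η, y⟫ / k₀ + L * ‖y‖ ^ 2) : ℝ) : ℂ)))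
      = (((r₀ / rT) ^ d : ℝ) : ℂ) *
        Complex.exp
          (-((2 * ‖x‖ ^ 2 / rT ^ 2 : ℝ) : ℂ) - ((‖y‖ ^ 2 / (2 * ρT ^ 2) : ℝ) : ℂ)
            + Complex.I * ((⟪x, y⟫ / χT ^ 2 : ℝ) : ℂ)) := by
  simpa only [finrank_euclideanSpace_fin] using
    transmitted_autocorrelation_gaussian_general x y hrT hχT hρT
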